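/- For every sign string S, every dominant state string J for S, and any complete execution of the growth algorithm from (S,J) with web tensor w, one has w = e^S_J + Σ_{J' < J} c(S,J,J') e^S_{J'}, where the sum runs over state strings J' for S that are lexicographically smaller than J, and every coefficient c(S,J,J') is a Laurent polynomial in v with nonnegative integer coefficients (an element of ℕ[v,v⁻¹] ⊂ K). In particular the coefficient of e^S_J in w is exactly 1 and the coefficient of e^S_{J'} vanishes whenever J' > J. -/

import Mathlib

/-!
Suppose a growth rule replaces the adjacent states `(j₁, j₂)` by a word `u`. The corresponding local
map sends `e_u` to `e_{j₁} ⊗ e_{j₂}` plus smaller terms, and sends every basis vector smaller than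
`e_u` to a combination of terms below `e_{j₁} ⊗ e_{j₂}`. The reason is that all local maps preserve
the sum of the states. For the U- and Y-rules this suffices: there `j₁ = 1` or `j₂ = -1`, so that a
pair larger than `(j₁, j₂)` has a larger sum. An H-map raises the left state by at most one, and the
H-rules attain this bound. Since a local map fixes all positions outside the rule, this
unitriangularity persists for whole strings in the lexicographic order, and the leading term of the
web tensor follows by induction over the execution. All matrix entries lie in the semiring
`ℕ[v, v⁻¹]`, hence so do all coefficients.
-/

noncomputable section

/-- The ground field `K = ℚ(v)`. -/
abbrev K : Type := RatFunc ℚ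

/-- The indeterminate `v`. -/
def v : K := RatFunc.X

/-- The three states `-1, 0, 1`. -/
inductive St where
  | neg : St
  | zero : St
  | pos : St
deriving DecidableEq

instance : Fintype St where
  elems := {St.neg, St.zero, St.pos}
  complete := fun x => by cases x <;> simp

/-- The integer value of a state. -/
def stval : St → ℤ
  | .neg => -1
  | .zero => 0
  | .pos => 1

/-- The order `-1 < 0 < 1` on states. -/
def stLt (a b : St) : Prop := stval a < stval b

/-- The weight `μ(s, j) ∈ ℤ²`; `true` is the sign `+`, `false` is `-`. -/
def wt : Bool → St → ℤ × ℤ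
  | true, .pos => (1, 0)
  | true, .zero => (-1, 1)
  | true, .neg => (0, -1)
  | false, .pos => (0, 1)
  | false, .zero => (1, -1)
  | false, .neg => (-1, 0)

/-- Total weight `Σ μ(s_k, j_k)` of a sign string and a state string. -/
def wtSum (S : List Bool) (J : List St) : ℤ × ℤ :=
  ((S.zip J).map fun p => wt p.1 p.2).sum

/-- A state string is dominant if its lattice path stays in the dominant
Weyl chamber and returns to the origin. -/
def Dominant (S : List Bool) (J : List St) : Prop :=
  J.length = S.length ∧
  (∀ k : ℕ, 0 ≤ (wtSum (S.take k) (J.take k)).1 ∧ 0 ≤ (wtSum (S.take k) (J.take k)).2) ∧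
  wtSum S J = 0

/-- Coefficients of `b^{+-}(1) ∈ V⁺ ⊗ V⁻`. -/
def bCpm : St → St → K
  | .pos, .neg => 1
  | .zero, .zero => v⁻¹
  | .neg, .pos => v⁻¹ ^ 2
  | _, _ => 0

/-- Coefficients of `b^{-+}(1) ∈ V⁻ ⊗ V⁺`. -/
def bCmp : St → St → K
  | .pos, .neg => 1
  | .zero, .zero => v⁻¹
  | .neg, .pos => v⁻¹ ^ 2
  | _, _ => 0

/-- Matrix entries of `σ_{+-} : V⁺ ⊗ V⁻ → K`. -/
def sCpm : St → St → K
  | .neg, .pos => 1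
  | .zero, .zero => v
  | .pos, .neg => v ^ 2
  | _, _ => 0

/-- Matrix entries of `σ_{-+} : V⁻ ⊗ V⁺ → K`. -/
def sCmp : St → St → K
  | .neg, .pos => 1
  | .zero, .zero => v
  | .pos, .neg => v ^ 2
  | _, _ => 0

/-- `tYpp a b c` is the coefficient of `e_a ⊗ e_b` in `t^{++}_-(e_c)`. -/
def tYpp : St → St → St → K
  | .pos, .zero, .pos => 1
  | .zero, .pos, .pos => v⁻¹
  | .pos, .neg, .zero => 1
  | .neg, .pos, .zero => v⁻¹
  | .zero, .neg, .neg => 1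
  | .neg, .zero, .neg => v⁻¹
  | _, _, _ => 0

/-- `tYmm a b c` is the coefficient of `e_a ⊗ e_b` in `t^{--}_+(e_c)`. -/
def tYmm : St → St → St → K
  | .pos, .zero, .pos => 1
  | .zero, .pos, .pos => v⁻¹
  | .pos, .neg, .zero => 1
  | .neg, .pos, .zero => v⁻¹
  | .zero, .neg, .neg => 1
  | .neg, .zero, .neg => v⁻¹
  | _, _, _ => 0

/-- `tLpp a b c` is the coefficient of `e_c` in `t^-_{++}(e_a ⊗ e_b)`. -/
def tLpp : St → St → St → K
  | .pos, .zero, .pos => v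
  | .zero, .pos, .pos => 1
  | .pos, .neg, .zero => v
  | .neg, .pos, .zero => 1
  | .zero, .neg, .neg => v
  | .neg, .zero, .neg => 1
  | _, _, _ => 0

/-- `tLmm a b c` is the coefficient of `e_c` in `t^+_{--}(e_a ⊗ e_b)`. -/
def tLmm : St → St → St → K
  | .pos, .zero, .pos => v
  | .zero, .pos, .pos => 1
  | .pos, .neg, .zero => v
  | .neg, .pos, .zero => 1
  | .zero, .neg, .neg => v
  | .neg, .zero, .neg => 1
  | _, _, _ => 0

/-- Matrix entries of the H-map
`(id_{V⁺} ⊗ t^-_{++}) ∘ (t^{++}_- ⊗ id_{V⁺}) : V⁻ ⊗ V⁺ → V⁺ ⊗ V⁻`: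
`HCpm a b c d` is the coefficient of `e_a ⊗ e_b` in the image of `e_c ⊗ e_d`. -/
def HCpm (a b c d : St) : K := ∑ y : St, tYpp a y c * tLpp y d b

/-- Matrix entries of the H-map
`(t^-_{++} ⊗ id_{V⁺}) ∘ (id_{V⁺} ⊗ t^{++}_-) : V⁺ ⊗ V⁻ → V⁻ ⊗ V⁺`:
`HCmp a b c d` is the coefficient of `e_a ⊗ e_b` in the image of `e_c ⊗ e_d`. -/
def HCmp (a b c d : St) : K := ∑ x : St, tLpp c x a * tYpp x b d

/-- State patterns of the three H-rules: `(j_k, j_{k+1})` on top, the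
replacement below. -/
inductive HPat : St → St → St → St → Prop where
  | h1 : HPat .pos .zero .zero .pos
  | h2 : HPat .zero .zero .neg .pos
  | h3 : HPat .zero .neg .neg .zero

/-- State patterns of the three Y-rules. -/
inductive YPat : St → St → St → Prop where
  | y1 : YPat .pos .zero .pos
  | y2 : YPat .pos .neg .zero
  | y3 : YPat .zero .neg .neg

/-- One application of a growth rule, rewriting `(S, J)` to `(S', J')`. -/
inductive Step : List Bool → List St → List Bool → List St → Prop where
  | hstep (A B : List Bool) (P Q : List St) (s1 s2 : Bool) (j1 j2 j1' j2' : St)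
      (hl : A.length = P.length) (hs : s1 ≠ s2) (hp : HPat j1 j2 j1' j2') :
      Step (A ++ s1 :: s2 :: B) (P ++ j1 :: j2 :: Q)
        (A ++ (!s1) :: (!s2) :: B) (P ++ j1' :: j2' :: Q)
  | ustep (A B : List Bool) (P Q : List St) (s1 s2 : Bool)
      (hl : A.length = P.length) (hs : s1 ≠ s2) :
      Step (A ++ s1 :: s2 :: B) (P ++ St.pos :: St.neg :: Q) (A ++ B) (P ++ Q)
  | ystep (A B : List Bool) (P Q : List St) (s : Bool) (j1 j2 j' : St)
      (hl : A.length = P.length) (hp : YPat j1 j2 j') :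
      Step (A ++ s :: s :: B) (P ++ j1 :: j2 :: Q) (A ++ (!s) :: B) (P ++ j' :: Q)

/-- A complete execution of the growth algorithm from `(S, J)` down to the
pair of empty strings. -/
inductive Exec : List Bool → List St → Type where
  | nil : Exec [] []
  | hstep (A B : List Bool) (P Q : List St) (s1 s2 : Bool) (j1 j2 j1' j2' : St)
      (hl : A.length = P.length) (hs : s1 ≠ s2) (hp : HPat j1 j2 j1' j2')
      (e : Exec (A ++ (!s1) :: (!s2) :: B) (P ++ j1' :: j2' :: Q)) :
      Exec (A ++ s1 :: s2 :: B) (P ++ j1 :: j2 :: Q)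
  | ustep (A B : List Bool) (P Q : List St) (s1 s2 : Bool)
      (hl : A.length = P.length) (hs : s1 ≠ s2)
      (e : Exec (A ++ B) (P ++ Q)) :
      Exec (A ++ s1 :: s2 :: B) (P ++ St.pos :: St.neg :: Q)
  | ystep (A B : List Bool) (P Q : List St) (s : Bool) (j1 j2 j' : St)
      (hl : A.length = P.length) (hp : YPat j1 j2 j')
      (e : Exec (A ++ (!s) :: B) (P ++ j' :: Q)) :
      Exec (A ++ s :: s :: B) (P ++ j1 :: j2 :: Q)

/-- The web tensor of an execution, as coordinates with respect to the basis
`e^S_J` of `V^S`: `web e L` is the coefficient of `e^S_L`. -/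
def web : {S : List Bool} → {J : List St} → Exec S J → List St → K
  | _, _, .nil, L => if L = [] then 1 else 0
  | _, _, .hstep A _ _ _ s1 _ _ _ _ _ _ _ _ e, L =>
      match L.drop A.length with
      | a :: b :: R =>
          ∑ c : St, ∑ d : St,
            (if s1 then HCpm a b c d else HCmp a b c d) *
              web e (L.take A.length ++ c :: d :: R)
      | _ => 0
  | _, _, .ustep A _ _ _ s1 _ _ _ e, L =>
      match L.drop A.length with
      | a :: b :: R => (if s1 then bCpm a b else bCmp a b) * web e (L.take A.length ++ R)
      | _ => 0
  | _, _, .ystep A _ _ _ s _ _ _ _ _ e, L =>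
      match L.drop A.length with
      | a :: b :: R =>
          ∑ c : St, (if s then tYpp a b c else tYmm a b c) * web e (L.take A.length ++ c :: R)
      | _ => 0

/-- `c ∈ v⁻¹ ℤ[v⁻¹]`: a polynomial in `v⁻¹` with zero constant term. -/
def ZeroConst (c : K) : Prop :=
  ∃ p : Polynomial ℤ, p.coeff 0 = 0 ∧ c = Polynomial.aeval v⁻¹ p

/-- `x` has the negative-exponent property relative to a state string `J`
(`n` is the length of the ambient sign string). -/
def NegExpProp (n : ℕ) (x : List St → K) (J : List St) : Prop :=
  x J = 1 ∧ ∀ J' : List St, J'.length = n → J' ≠ J → ZeroConst (x J')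

/-- `c ∈ ℕ[v, v⁻¹]`: a Laurent polynomial with nonnegative integer
coefficients. -/
def IsNatLaurent (c : K) : Prop :=
  ∃ (p : Polynomial ℕ) (m : ℕ), c = v⁻¹ ^ m * Polynomial.aeval v p

/-- `c ∈ ℤ[v⁻¹]`. -/
def InZInv (c : K) : Prop := ∃ p : Polynomial ℤ, c = Polynomial.aeval v⁻¹ p

/-- Property P: all coefficients lie in `ℤ[v⁻¹]` and at most one of them has a
nonzero constant term. -/
def PropP (n : ℕ) (x : List St → K) : Prop :=
  (∀ J : List St, J.length = n → InZInv (x J)) ∧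
  ∀ J1 J2 : List St, J1.length = n → J2.length = n →
    ¬ ZeroConst (x J1) → ¬ ZeroConst (x J2) → J1 = J2

/-- The sign string `(+,+,−,−,+,+,−,−,+,+,−,−)`. -/
def base : List Bool :=
  [true, true, false, false, true, true, false, false, true, true, false, false]


/-! ### Local maps on strings -/

section LocalMaps

variable {α ι R : Type*} {r : α → α → Prop}

lemma lex_append_append_iff {P P' : List α} (h : P.length = P'.length) (X Y : List α) :
    List.Lex r (P ++ X) (P' ++ Y) ↔ List.Lex r P P' ∨ P = P' ∧ List.Lex r X Y := by
  induction P generalizing P' with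
  | nil =>
    obtain rfl : P' = [] := List.length_eq_zero_iff.mp h.symm
    simp
  | cons p P ih =>
    obtain _ | ⟨p', P'⟩ := P'
    · simp at h
    · simp only [List.cons_append, List.cons_lex_cons_iff, ih (Nat.succ.inj h), List.cons.injEq]
      tauto

/-- The tensor with coordinates `x` has leading term `e_J`: the coefficient of `e_J` is `1`, and
those of the larger basis vectors vanish. -/
structure HasLeadingWord [Zero R] [One R] (r : α → α → Prop) (x : List α → R) (J : List α) :
    Prop where
  apply_self : x J = 1
  eq_zero_of_lex : ∀ L, List.Lex r J L → x L = 0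

/-- A linear map `V^{⊗m} → V ⊗ V` in coordinates, where `V` has a basis indexed by `α` and the basis
of `V^{⊗m}` consists of the `e_{word i}`: `coeff a b i` is the coefficient of `e_a ⊗ e_b` in the
image of `e_{word i}`. Indexing by an arbitrary `ι` makes this cover `m = 0, 1, 2` at once. -/
structure LocalMap (ι α R : Type*) where
  word : ι → List α
  coeff : α → α → ι → R

namespace LocalMap

/-- The coordinates of `(id^{⊗n} ⊗ T ⊗ id)(x)`. As in `web`, a string too short to have the
positions `n` and `n + 1` gets coefficient `0`. -/
def applyAt [Fintype ι] [NonUnitalNonAssocSemiring R] (T : LocalMap ι α R) (n : ℕ)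
    (x : List α → R) (L : List α) : R :=
  match L.drop n with
  | a :: b :: Q => ∑ i, T.coeff a b i * x (L.take n ++ (T.word i ++ Q))
  | _ => 0

/-- `T` sends `e_{word i₀}` to `e_{j₁} ⊗ e_{j₂}` plus smaller terms, and no basis vector that is not
larger than `e_{word i₀}` contributes a term above `e_{j₁} ⊗ e_{j₂}`, or at it unless it is
`e_{word i₀}` itself. -/
structure IsUnitriangularAt [Zero R] [One R] (T : LocalMap ι α R) (r : α → α → Prop)
    (j₁ j₂ : α) (i₀ : ι) : Prop where
  length_word : ∀ i, (T.word i₀).length = (T.word i).length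
  coeff_self : T.coeff j₁ j₂ i₀ = 1
  lex_of_ne : ∀ i, T.coeff j₁ j₂ i ≠ 0 → i ≠ i₀ → List.Lex r (T.word i₀) (T.word i)
  lex_of_lex : ∀ a b i, T.coeff a b i ≠ 0 → List.Lex r [j₁, j₂] [a, b] →
    List.Lex r (T.word i₀) (T.word i)

lemma applyAt_mem [Fintype ι] [NonUnitalNonAssocSemiring R] {σ : Type*} [SetLike σ R]
    [NonUnitalSubsemiringClass σ R] {S : σ} {T : LocalMap ι α R} (hT : ∀ a b i, T.coeff a b i ∈ S)
    (n : ℕ) {x : List α → R} (hx : ∀ L, x L ∈ S) (L : List α) : T.applyAt n x L ∈ S := by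
  rw [applyAt]
  split
  · exact sum_mem fun i _ => mul_mem (hT _ _ i) (hx _)
  · exact zero_mem S

lemma applyAt_append [Fintype ι] [NonUnitalNonAssocSemiring R] (T : LocalMap ι α R) (P : List α)
    (a b : α) (Q : List α) (x : List α → R) :
    T.applyAt P.length x (P ++ a :: b :: Q) = ∑ i, T.coeff a b i * x (P ++ (T.word i ++ Q)) := by
  simp [applyAt]

section Leading

variable {T : LocalMap ι α R} {x : List α → R} {P Q : List α} {j₁ j₂ : α} {i₀ : ι}

lemma IsUnitriangularAt.coeff_mul_eq_zero_of_ne [MulZeroOneClass R]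
    (hT : T.IsUnitriangularAt r j₁ j₂ i₀) (hx : HasLeadingWord r x (P ++ (T.word i₀ ++ Q))) {i : ι}
    (hi : i ≠ i₀) : T.coeff j₁ j₂ i * x (P ++ (T.word i ++ Q)) = 0 := by
  refine mul_eq_zero_of_ne_zero_imp_eq_zero fun hcoeff => hx.eq_zero_of_lex _ ?_
  rw [lex_append_append_iff rfl, lex_append_append_iff (hT.length_word i)]
  exact .inr ⟨rfl, .inl (hT.lex_of_ne i hcoeff hi)⟩

lemma IsUnitriangularAt.coeff_mul_eq_zero_of_lex [MulZeroOneClass R]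
    (hT : T.IsUnitriangularAt r j₁ j₂ i₀) (hx : HasLeadingWord r x (P ++ (T.word i₀ ++ Q)))
    {P' Q' : List α} {a b : α} (hP : P.length = P'.length)
    (hlex : List.Lex r (P ++ j₁ :: j₂ :: Q) (P' ++ a :: b :: Q')) (i : ι) :
    T.coeff a b i * x (P' ++ (T.word i ++ Q')) = 0 := by
  refine mul_eq_zero_of_ne_zero_imp_eq_zero fun hcoeff => hx.eq_zero_of_lex _ ?_
  rw [lex_append_append_iff hP] at hlex ⊢
  refine hlex.imp_right fun ⟨hPP', hlex⟩ => ⟨hPP', ?_⟩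
  rw [lex_append_append_iff (hT.length_word i)]
  rcases (lex_append_append_iff (P := [j₁, j₂]) (P' := [a, b]) rfl _ _).1 hlex with
    hpair | ⟨hpair, hQ⟩
  · exact .inl (hT.lex_of_lex a b i hcoeff hpair)
  · obtain ⟨rfl, rfl⟩ : j₁ = a ∧ j₂ = b := by simpa using hpair
    rcases eq_or_ne i i₀ with rfl | hi
    · exact .inr ⟨rfl, hQ⟩
    · exact .inl (hT.lex_of_ne i hcoeff hi)

theorem IsUnitriangularAt.hasLeadingWord_applyAt [Fintype ι] [NonAssocSemiring R]
    (hT : T.IsUnitriangularAt r j₁ j₂ i₀) (hx : HasLeadingWord r x (P ++ (T.word i₀ ++ Q))) :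
    HasLeadingWord r (T.applyAt P.length x) (P ++ j₁ :: j₂ :: Q) where
  apply_self := by
    rw [applyAt_append, Fintype.sum_eq_single i₀ fun i => hT.coeff_mul_eq_zero_of_ne hx,
      hT.coeff_self, hx.apply_self, one_mul]
  eq_zero_of_lex L hL := by
    rw [applyAt]
    split
    next a b Q' hdrop =>
      have hlen : P.length = (L.take P.length).length := by
        have := congrArg List.length hdrop
        simp only [List.length_drop, List.length_cons] at this
        rw [List.length_take]
        omega
      rw [← L.take_append_drop P.length, hdrop] at hL
      exact Finset.sum_eq_zero fun i _ => hT.coeff_mul_eq_zero_of_lex hx hlen hL i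
    next => rfl

end Leading

end LocalMap

end LocalMaps

/-! ### The local maps of the growth rules -/

/-- The H-map whose target has sign `s` on the left. -/
def hMap (s : Bool) : LocalMap (St × St) St K where
  word i := [i.1, i.2]
  coeff a b i := if s then HCpm a b i.1 i.2 else HCmp a b i.1 i.2

/-- The map `b^{s,-s}`. -/
def uMap (s : Bool) : LocalMap Unit St K where
  word _ := []
  coeff a b _ := if s then bCpm a b else bCmp a b

/-- The map `t^{ss}_{-s}`. -/
def yMap (s : Bool) : LocalMap St St K where
  word c := [c]
  coeff a b c := if s then tYpp a b c else tYmm a b c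

section Web

variable {A B : List Bool} {P Q : List St} {s s₁ s₂ : Bool} {j₁ j₂ j₁' j₂' j' : St}

lemma web_hstep (hl : A.length = P.length) (hs : s₁ ≠ s₂) (hp : HPat j₁ j₂ j₁' j₂')
    (e : Exec (A ++ (!s₁) :: (!s₂) :: B) (P ++ j₁' :: j₂' :: Q)) :
    web (.hstep A B P Q s₁ s₂ j₁ j₂ j₁' j₂' hl hs hp e) = (hMap s₁).applyAt P.length (web e) := by
  funext L
  simp only [web, hl, LocalMap.applyAt]
  rcases L.drop P.length with _ | ⟨a, _ | ⟨b, R⟩⟩ <;> simp [hMap, Fintype.sum_prod_type]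

lemma web_ustep (hl : A.length = P.length) (hs : s₁ ≠ s₂) (e : Exec (A ++ B) (P ++ Q)) :
    web (.ustep A B P Q s₁ s₂ hl hs e) = (uMap s₁).applyAt P.length (web e) := by
  funext L
  simp only [web, hl, LocalMap.applyAt]
  rcases L.drop P.length with _ | ⟨a, _ | ⟨b, R⟩⟩ <;> simp [uMap]

lemma web_ystep (hl : A.length = P.length) (hp : YPat j₁ j₂ j')
    (e : Exec (A ++ (!s) :: B) (P ++ j' :: Q)) :
    web (.ystep A B P Q s j₁ j₂ j' hl hp e) = (yMap s).applyAt P.length (web e) := by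
  funext L
  simp only [web, hl, LocalMap.applyAt]
  rcases L.drop P.length with _ | ⟨a, _ | ⟨b, R⟩⟩ <;> simp [yMap]

end Web

/-! ### Positivity -/

/-- The semiring `ℕ[v, v⁻¹]`. -/
def natLaurent : Subsemiring K where
  carrier := {c | IsNatLaurent c}
  zero_mem' := ⟨0, 0, by simp⟩
  one_mem' := ⟨1, 0, by simp⟩
  add_mem' := by
    rintro _ _ ⟨p, m, rfl⟩ ⟨q, n, rfl⟩
    refine ⟨Polynomial.X ^ n * p + Polynomial.X ^ m * q, m + n, ?_⟩
    have hv : v ≠ 0 := RatFunc.X_ne_zero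
    simp only [map_add, map_mul, map_pow, Polynomial.aeval_X, inv_pow, pow_add]
    field_simp
  mul_mem' := by
    rintro _ _ ⟨p, m, rfl⟩ ⟨q, n, rfl⟩
    exact ⟨p * q, m + n, by rw [map_mul, pow_add]; ring⟩

lemma v_mem_natLaurent : v ∈ natLaurent := ⟨Polynomial.X, 0, by simp⟩

lemma v_inv_mem_natLaurent : v⁻¹ ∈ natLaurent := ⟨1, 1, by simp⟩

lemma tYpp_mem_natLaurent (a b c : St) : tYpp a b c ∈ natLaurent := by
  rw [tYpp.eq_def]
  split <;> first | exact zero_mem _ | exact one_mem _ | exact v_inv_mem_natLaurent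

lemma tLpp_mem_natLaurent (a b c : St) : tLpp a b c ∈ natLaurent := by
  rw [tLpp.eq_def]
  split <;> first | exact zero_mem _ | exact one_mem _ | exact v_mem_natLaurent

lemma bCpm_mem_natLaurent (a b : St) : bCpm a b ∈ natLaurent := by
  rw [bCpm.eq_def]
  split <;>
    first
    | exact zero_mem _
    | exact one_mem _
    | exact v_inv_mem_natLaurent
    | exact pow_mem v_inv_mem_natLaurent 2

lemma bCmp_eq_bCpm : bCmp = bCpm := rfl

lemma tYmm_eq_tYpp : tYmm = tYpp := rfl

lemma HCpm_mem_natLaurent (a b c d : St) : HCpm a b c d ∈ natLaurent :=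
  sum_mem fun _ _ => mul_mem (tYpp_mem_natLaurent _ _ _) (tLpp_mem_natLaurent _ _ _)

lemma HCmp_mem_natLaurent (a b c d : St) : HCmp a b c d ∈ natLaurent :=
  sum_mem fun _ _ => mul_mem (tLpp_mem_natLaurent _ _ _) (tYpp_mem_natLaurent _ _ _)

lemma hMap_coeff_mem_natLaurent (s : Bool) (a b : St) (i : St × St) :
    (hMap s).coeff a b i ∈ natLaurent := by
  cases s
  exacts [HCmp_mem_natLaurent a b i.1 i.2, HCpm_mem_natLaurent a b i.1 i.2]

lemma uMap_coeff_mem_natLaurent (s : Bool) (a b : St) (i : Unit) :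
    (uMap s).coeff a b i ∈ natLaurent := by
  simpa [uMap, bCmp_eq_bCpm] using bCpm_mem_natLaurent a b

lemma yMap_coeff_mem_natLaurent (s : Bool) (a b c : St) : (yMap s).coeff a b c ∈ natLaurent := by
  simpa [yMap, tYmm_eq_tYpp] using tYpp_mem_natLaurent a b c

theorem web_mem_natLaurent {S : List Bool} {J : List St} (e : Exec S J) (L : List St) :
    web e L ∈ natLaurent := by
  induction e generalizing L with
  | nil =>
    rw [web]
    split
    exacts [one_mem _, zero_mem _]
  | hstep A B P Q s₁ s₂ j₁ j₂ j₁' j₂' hl hs hp e ih =>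
    rw [web_hstep]
    exact LocalMap.applyAt_mem (hMap_coeff_mem_natLaurent s₁) _ ih L
  | ustep A B P Q s₁ s₂ hl hs e ih =>
    rw [web_ustep]
    exact LocalMap.applyAt_mem (uMap_coeff_mem_natLaurent s₁) _ ih L
  | ystep A B P Q s j₁ j₂ j' hl hp e ih =>
    rw [web_ystep]
    exact LocalMap.applyAt_mem (yMap_coeff_mem_natLaurent s) _ ih L

/-! ### Conservation of the sum of the states -/

lemma stval_injective : Function.Injective stval := by
  rintro (_ | _ | _) (_ | _ | _) h <;> first | rfl | cases h

lemma neg_one_le_stval (a : St) : -1 ≤ stval a := by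
  cases a <;> simp [stval]

lemma stval_le_one (a : St) : stval a ≤ 1 := by
  cases a <;> simp [stval]

lemma lex_singleton_iff_stval {a b : St} : List.Lex stLt [a] [b] ↔ stval a < stval b := by
  rw [List.lex_singleton_iff, stLt]

lemma lex_pair_iff_stval {a b c d : St} :
    List.Lex stLt [a, b] [c, d] ↔
      stval a < stval c ∨ stval a = stval c ∧ stval b < stval d := by
  rw [List.cons_lex_cons_iff, lex_singleton_iff_stval, stLt, stval_injective.eq_iff]

lemma stval_add_lt_of_lex_pair {j₁ j₂ a b : St} (hj : j₁ = .pos ∨ j₂ = .neg)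
    (h : List.Lex stLt [j₁, j₂] [a, b]) : stval j₁ + stval j₂ < stval a + stval b := by
  rw [lex_pair_iff_stval] at h
  have ha := stval_le_one a
  have hb := neg_one_le_stval b
  rcases hj with rfl | rfl
  · have : stval .pos = 1 := rfl
    omega
  · have : stval .neg = -1 := rfl
    omega

lemma stval_add_stval_of_tYpp_ne_zero {a b c : St} (h : tYpp a b c ≠ 0) :
    stval a + stval b = stval c := by
  revert h
  rw [tYpp.eq_def]
  split <;> simp [stval]

lemma stval_add_stval_of_tLpp_ne_zero {a b c : St} (h : tLpp a b c ≠ 0) :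
    stval a + stval b = stval c := by
  revert h
  rw [tLpp.eq_def]
  split <;> simp [stval]

lemma stval_add_stval_of_bCpm_ne_zero {a b : St} (h : bCpm a b ≠ 0) :
    stval a + stval b = 0 := by
  revert h
  rw [bCpm.eq_def]
  split <;> simp [stval]

lemma stval_of_HCpm_ne_zero {a b c d : St} (h : HCpm a b c d ≠ 0) :
    stval c + stval d = stval a + stval b ∧ stval a ≤ stval c + 1 := by
  obtain ⟨y, -, hy⟩ := Finset.exists_ne_zero_of_sum_ne_zero h
  have hleft := stval_add_stval_of_tYpp_ne_zero (left_ne_zero_of_mul hy)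
  have hright := stval_add_stval_of_tLpp_ne_zero (right_ne_zero_of_mul hy)
  have := neg_one_le_stval y
  omega

lemma stval_of_HCmp_ne_zero {a b c d : St} (h : HCmp a b c d ≠ 0) :
    stval c + stval d = stval a + stval b ∧ stval a ≤ stval c + 1 := by
  obtain ⟨x, -, hx⟩ := Finset.exists_ne_zero_of_sum_ne_zero h
  have hleft := stval_add_stval_of_tLpp_ne_zero (left_ne_zero_of_mul hx)
  have hright := stval_add_stval_of_tYpp_ne_zero (right_ne_zero_of_mul hx)
  have := stval_le_one x
  omega

lemma stval_of_hMap_coeff_ne_zero {s : Bool} {a b : St} {i : St × St}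
    (h : (hMap s).coeff a b i ≠ 0) :
    stval i.1 + stval i.2 = stval a + stval b ∧ stval a ≤ stval i.1 + 1 := by
  cases s
  exacts [stval_of_HCmp_ne_zero h, stval_of_HCpm_ne_zero h]

lemma stval_add_stval_of_uMap_coeff_ne_zero {s : Bool} {a b : St} {i : Unit}
    (h : (uMap s).coeff a b i ≠ 0) : stval a + stval b = 0 :=
  stval_add_stval_of_bCpm_ne_zero (by simpa [uMap, bCmp_eq_bCpm] using h)

lemma stval_add_stval_of_yMap_coeff_ne_zero {s : Bool} {a b c : St}
    (h : (yMap s).coeff a b c ≠ 0) : stval a + stval b = stval c :=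
  stval_add_stval_of_tYpp_ne_zero (by simpa [yMap, tYmm_eq_tYpp] using h)

lemma HPat.stval_sub_eq_one {j₁ j₂ j₁' j₂' : St} (hp : HPat j₁ j₂ j₁' j₂') :
    stval j₁ - stval j₁' = 1 ∧ stval j₂' - stval j₂ = 1 := by
  cases hp <;> simp [stval]

lemma YPat.stval_add_stval {j₁ j₂ j' : St} (hp : YPat j₁ j₂ j') :
    stval j₁ + stval j₂ = stval j' := by
  cases hp <;> simp [stval]

lemma YPat.eq_pos_or_eq_neg {j₁ j₂ j' : St} (hp : YPat j₁ j₂ j') : j₁ = .pos ∨ j₂ = .neg := by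
  cases hp <;> simp

/-! ### Leading terms -/

lemma sum_univ_St {M : Type*} [AddCommMonoid M] (f : St → M) :
    ∑ c, f c = f .neg + (f .zero + f .pos) := by
  simp [Finset.univ, Fintype.elems]

lemma hMap_isUnitriangularAt (s : Bool) {j₁ j₂ j₁' j₂' : St} (hp : HPat j₁ j₂ j₁' j₂') :
    (hMap s).IsUnitriangularAt stLt j₁ j₂ (j₁', j₂') where
  length_word _ := rfl
  coeff_self := by
    cases hp <;> cases s <;> simp [hMap, HCpm, HCmp, sum_univ_St, tYpp, tLpp]
  lex_of_ne i hi hne := by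
    have hcoeff := stval_of_hMap_coeff_ne_zero hi
    have hpat := hp.stval_sub_eq_one
    have hne' : ¬(stval i.1 = stval j₁' ∧ stval i.2 = stval j₂') := by
      simpa [stval_injective.eq_iff, Prod.ext_iff] using hne
    exact (lex_pair_iff_stval (a := j₁') (b := j₂')).2 (by omega)
  lex_of_lex a b i hi hlt := by
    have hcoeff := stval_of_hMap_coeff_ne_zero hi
    have hpat := hp.stval_sub_eq_one
    rw [lex_pair_iff_stval] at hlt
    exact (lex_pair_iff_stval (a := j₁') (b := j₂')).2 (by omega)

lemma uMap_isUnitriangularAt (s : Bool) : (uMap s).IsUnitriangularAt stLt .pos .neg () where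
  length_word _ := rfl
  coeff_self := by cases s <;> rfl
  lex_of_ne _ _ hi := (hi rfl).elim
  lex_of_lex _ _ _ hcoeff hlt :=
    absurd (stval_add_lt_of_lex_pair (.inl rfl) hlt)
      (stval_add_stval_of_uMap_coeff_ne_zero hcoeff).not_gt

lemma yMap_isUnitriangularAt (s : Bool) {j₁ j₂ j' : St} (hp : YPat j₁ j₂ j') :
    (yMap s).IsUnitriangularAt stLt j₁ j₂ j' where
  length_word _ := rfl
  coeff_self := by cases hp <;> cases s <;> rfl
  lex_of_ne c hc hne :=
    (hne (stval_injective
      ((stval_add_stval_of_yMap_coeff_ne_zero hc).symm.trans hp.stval_add_stval))).elim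
  lex_of_lex a b c hc hlt := by
    refine lex_singleton_iff_stval.2 ?_
    rw [← stval_add_stval_of_yMap_coeff_ne_zero hc, ← hp.stval_add_stval]
    exact stval_add_lt_of_lex_pair hp.eq_pos_or_eq_neg hlt

theorem web_hasLeadingWord {S : List Bool} {J : List St} (e : Exec S J) :
    HasLeadingWord stLt (web e) J := by
  induction e with
  | nil => exact ⟨by simp [web], fun L hL => by cases hL; simp [web]⟩
  | hstep A B P Q s₁ s₂ j₁ j₂ j₁' j₂' hl hs hp e ih =>
    rw [web_hstep]
    exact (hMap_isUnitriangularAt s₁ hp).hasLeadingWord_applyAt ih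
  | ustep A B P Q s₁ s₂ hl hs e ih =>
    rw [web_ustep]
    exact (uMap_isUnitriangularAt s₁).hasLeadingWord_applyAt ih
  | ystep A B P Q s j₁ j₂ j' hl hp e ih =>
    rw [web_ystep]
    exact (yMap_isUnitriangularAt s hp).hasLeadingWord_applyAt ih

/-- the web tensor is `e^S_J` plus an `ℕ[v,v⁻¹]`-combination of
lexicographically smaller basis vectors. -/
theorem web_triangular (S : List Bool) (J : List St) (hJ : Dominant S J)
    (e : Exec S J) :
    web e J = 1 ∧
    ∀ J' : List St, J'.length = S.length →
      (List.Lex stLt J J' → web e J' = 0) ∧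
      (List.Lex stLt J' J → IsNatLaurent (web e J')) :=
  ⟨(web_hasLeadingWord e).apply_self, fun J' _ =>
    ⟨(web_hasLeadingWord e).eq_zero_of_lex J', fun _ => web_mem_natLaurent e J'⟩⟩

end
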